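/- arXiv:math/0602346 — 6 statements merged into one kernel-verified Lean document; each statement's English description precedes it below -/
import Mathlib

section
/- For every x ∈ ℝ, −(1/(2π)) ∫_ℝ e^{−itx} e^{−|t|} |t| log|t| dt = [ ((1−x²)/(1+x²))( (1/2) log(1+x²) − 1 + γ ) + (2x/(1+x²)) arctan x ] · (1/(π(1+x²))), where γ is the Euler–Mascheroni constant. Equivalently, the maximum-likelihood score in the characteristic exponent α at the Cauchy point α = 1 is h_α(x) = ((1−x²)/(1+x²))((1/2)log(1+x²) − 1 + γ) + (2x/(1+x²)) arctan x. -/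
open MeasureTheory Real

lemma aux_mellin (z : ℂ) (hz : 0 < z.re) (s : ℂ) (hs : 0 < s.re) :
    MellinConvergent (fun t : ℝ => Real.log t • Complex.exp (-(z * t))) s ∧
      HasDerivAt (mellin (fun t : ℝ => Complex.exp (-(z * t))))
        (mellin (fun t : ℝ => Real.log t • Complex.exp (-(z * t))) s) s := by
  have hc : Continuous (fun t : ℝ => Complex.exp (-(z * t))) := by fun_prop
  refine mellin_hasDerivAt_of_isBigO_rpow (a := s.re + 1) (b := 0) ?_ ?_ (by linarith) ?_ hs
  · exact hc.locallyIntegrable.locallyIntegrableOn _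
  · refine Asymptotics.IsBigO.trans ?_ (isLittleO_exp_neg_mul_rpow_atTop hz _).isBigO
    refine Asymptotics.IsBigO.of_norm_le fun t => ?_
    rw [Complex.norm_exp]
    simp
  · simp only [neg_zero, Real.rpow_zero]
    exact (hc.tendsto 0).mono_left nhdsWithin_le_nhds |>.isBigO_one ℝ

/-- The Laplace-type integral. -/
noncomputable def auxG (z : ℂ) : ℂ :=
  ∫ t in Set.Ioi (0:ℝ), ((t * Real.log t : ℝ) : ℂ) * Complex.exp (-(z * t))

lemma aux_int (n : ℕ) (z : ℂ) (hz : 0 < z.re) :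
    IntegrableOn (fun t : ℝ => ((t ^ n * Real.log t : ℝ) : ℂ) * Complex.exp (-(z * t)))
      (Set.Ioi 0) := by
  have := (aux_mellin z hz (n + 1) (by simp; positivity)).1
  unfold MellinConvergent at this
  refine this.congr_fun (fun t ht => ?_) measurableSet_Ioi
  simp [mul_assoc]

lemma auxG_real (r : ℝ) (hr : 0 < r) :
    auxG r = (1 - Real.eulerMascheroniConstant - Complex.log r) / (r : ℂ) ^ 2 := by
  have hr' : (r : ℂ) ≠ 0 := by exact_mod_cast hr.ne'
  have h := (aux_mellin r (by simpa using hr) 2 (by simp)).2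
  have e : mellin (fun t : ℝ => Real.log t • Complex.exp (-((r:ℂ) * t))) 2 = auxG r := by
    unfold mellin auxG
    refine setIntegral_congr_fun measurableSet_Ioi (fun t ht => ?_)
    have : (2 - 1 : ℂ) = 1 := by norm_num
    simp [this, mul_assoc]
  rw [e] at h
  have hG : HasDerivAt Complex.Gamma (-Real.eulerMascheroniConstant + 1) 2 := by
    have := Complex.hasDerivAt_Gamma_nat 1
    norm_num at this
    exact this
  have h2 : HasDerivAt (fun s : ℂ => (1 / (r:ℂ)) ^ s * Complex.Gamma s)
      ((1 / (r:ℂ)) ^ (2:ℂ) * Complex.log (1 / r) * 1 * Complex.Gamma 2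
        + (1 / (r:ℂ)) ^ (2:ℂ) * (-Real.eulerMascheroniConstant + 1)) 2 :=
    ((hasDerivAt_id (2:ℂ)).const_cpow (Or.inl (by simpa using hr'))).mul hG
  have h3 : (mellin (fun t : ℝ => Complex.exp (-((r:ℂ) * t)))) =ᶠ[nhds 2]
      (fun s : ℂ => (1 / (r:ℂ)) ^ s * Complex.Gamma s) := by
    have : {s : ℂ | 0 < s.re} ∈ nhds (2:ℂ) :=
      (isOpen_lt continuous_const Complex.continuous_re).mem_nhds (by simp)
    filter_upwards [this] with s hs
    rw [← Complex.integral_cpow_mul_exp_neg_mul_Ioi hs hr]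
    rfl
  rw [(h2.congr_of_eventuallyEq h3).unique h |>.symm]
  have hl : Complex.log (1 / (r:ℂ)) = - Complex.log r := by
    rw [one_div, Complex.log_inv]
    rw [Complex.arg_ofReal_of_nonneg hr.le]; exact Real.pi_pos.ne
  have hg : Complex.Gamma 2 = 1 := by
    simp
  rw [hl, hg, Complex.cpow_ofNat]
  field_simp
  ring

lemma auxG_diff (z : ℂ) (hz : 0 < z.re) : DifferentiableAt ℂ auxG z := by
  have hs : {w : ℂ | z.re / 2 < w.re} ∈ nhds z :=
    (isOpen_lt continuous_const Complex.continuous_re).mem_nhds (by simp; linarith)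
  have hI : IntegrableOn (fun t : ℝ => ‖((t ^ 2 * Real.log t : ℝ) : ℂ) *
      Complex.exp (-(((z.re / 2 : ℝ) : ℂ) * t))‖) (Set.Ioi 0) :=
    (aux_int 2 ((z.re / 2 : ℝ) : ℂ) (by rw [Complex.ofReal_re]; linarith)).norm
  have h1 := aux_int 1 z hz
  simp only [pow_one] at h1
  refine (hasDerivAt_integral_of_dominated_loc_of_deriv_le (μ := volume.restrict (Set.Ioi 0))
    (F := fun (w : ℂ) (t : ℝ) => ((t * Real.log t : ℝ) : ℂ) * Complex.exp (-(w * t)))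
    (F' := fun (w : ℂ) (t : ℝ) =>
      ((t * Real.log t : ℝ) : ℂ) * (Complex.exp (-(w * t)) * (-(1 * t))))
    hs ?_ h1 ?_ ?_ hI ?_).2.differentiableAt
  · exact Filter.Eventually.of_forall fun w => (by fun_prop : Measurable _).aestronglyMeasurable
  · exact (by fun_prop : Measurable _).aestronglyMeasurable
  · refine (ae_restrict_mem measurableSet_Ioi).mono fun t ht w hw => ?_
    have ht : 0 < t := ht
    have hw : z.re / 2 < w.re := hw
    simp only [norm_mul, Complex.norm_exp, Complex.norm_real, norm_neg, one_mul,
      norm_pow, Complex.neg_re, Complex.re_mul_ofReal, Complex.ofReal_re]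
    have : Real.exp (-(w.re * t)) ≤ Real.exp (-(z.re / 2 * t)) := by
      apply Real.exp_le_exp.2
      nlinarith
    calc ‖t‖ * ‖Real.log t‖ * (Real.exp (-(w.re * t)) * ‖t‖)
        = ‖t‖ ^ 2 * ‖Real.log t‖ * Real.exp (-(w.re * t)) := by ring
      _ ≤ _ := by gcongr
  · refine Filter.Eventually.of_forall fun t w hw => ?_
    exact ((((hasDerivAt_id w).mul_const (t:ℂ)).neg).cexp).const_mul _

lemma auxG_eq (z : ℂ) (hz : 0 < z.re) :
    auxG z = (1 - Real.eulerMascheroniConstant - Complex.log z) / z ^ 2 := by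
  have ho : IsOpen {w : ℂ | 0 < w.re} := isOpen_lt continuous_const Complex.continuous_re
  have hA : AnalyticOnNhd ℂ auxG {w : ℂ | 0 < w.re} :=
    DifferentiableOn.analyticOnNhd (fun w hw => (auxG_diff w hw).differentiableWithinAt) ho
  have hB : AnalyticOnNhd ℂ (fun z : ℂ =>
      (1 - Real.eulerMascheroniConstant - Complex.log z) / z ^ 2) {w : ℂ | 0 < w.re} := by
    refine DifferentiableOn.analyticOnNhd (fun w hw => ?_) ho
    have hw : 0 < w.re := hw
    have h0 : w ≠ 0 := by rintro rfl; simp at hw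
    have : DifferentiableAt ℂ Complex.log w := Complex.differentiableAt_log (Or.inl hw)
    refine DifferentiableAt.differentiableWithinAt ?_
    exact (this.const_sub _).div (by fun_prop) (by simpa using h0)
  have hp : IsPreconnected {w : ℂ | 0 < w.re} := (convex_halfSpace_re_gt 0).isPreconnected
  refine hA.eqOn_of_preconnected_of_frequently_eq hB hp (z₀ := 1) (by simp) ?_ hz
  have ht : Filter.Tendsto (fun r : ℝ => (r : ℂ)) (nhdsWithin 1 (Set.Ioi 1)) (nhdsWithin 1 {1}ᶜ) := by
    refine tendsto_nhdsWithin_iff.2 ⟨?_, ?_⟩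
    · exact (Complex.continuous_ofReal.tendsto' 1 1 (by simp)).mono_left nhdsWithin_le_nhds
    · filter_upwards [self_mem_nhdsWithin] with r hr
      have : (1:ℝ) < r := hr
      simpa using this.ne'
  refine ht.frequently (Filter.Eventually.frequently ?_)
  filter_upwards [self_mem_nhdsWithin] with r hr
  have : (1:ℝ) < r := hr
  exact auxG_real r (by linarith)

lemma aux_log (x : ℝ) :
    Complex.log (1 + x * Complex.I) =
      ((1 / 2 * Real.log (1 + x ^ 2) : ℝ) : ℂ) + (Real.arctan x : ℝ) * Complex.I := by
  have hn : ‖(1 + x * Complex.I : ℂ)‖ = √(1 + x ^ 2) := by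
    have := Complex.norm_add_mul_I 1 x
    simpa using this
  apply Complex.ext
  · simp only [Complex.log_re, hn, Real.log_sqrt (by positivity : 0 ≤ 1 + x ^ 2)]
    simp only [Complex.add_re, Complex.ofReal_re, Complex.re_ofReal_mul, Complex.I_re]
    ring
  · simp only [Complex.log_im]
    rw [Complex.arg_of_re_nonneg (by simp), hn, Real.arctan_eq_arcsin]
    simp

lemma aux_integral (x : ℝ) :
    ∫ t : ℝ, Complex.exp (-(Complex.I * t * x)) * (Real.exp (-|t|) : ℂ) * ((|t| : ℝ) : ℂ)
          * ((Real.log |t| : ℝ) : ℂ) = auxG (1 + (-x : ℝ) * Complex.I) + auxG (1 + x * Complex.I) := by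
  set f : ℝ → ℂ := fun t => Complex.exp (-(Complex.I * t * x)) * (Real.exp (-|t|) : ℂ)
    * ((|t| : ℝ) : ℂ) * ((Real.log |t| : ℝ) : ℂ) with hf
  have key : ∀ y t : ℝ, 0 < t → Complex.exp (-(Complex.I * t * y)) * (Real.exp (-|t|) : ℂ)
    * ((|t| : ℝ) : ℂ) * ((Real.log |t| : ℝ) : ℂ) =
      ((t * Real.log t : ℝ) : ℂ) * Complex.exp (-((1 + y * Complex.I) * t)) := by
    intro y t ht
    rw [abs_of_pos ht, show (-((1 + y * Complex.I) * t) : ℂ) = -(Complex.I * t * y) + (-t : ℝ) by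
      push_cast; ring, Complex.exp_add]
    push_cast; ring
  have hi : ∀ y : ℝ, IntegrableOn (fun t : ℝ => ((t * Real.log t : ℝ) : ℂ) *
      Complex.exp (-((1 + y * Complex.I) * t))) (Set.Ioi 0) := by
    intro y
    simpa only [pow_one] using aux_int 1 (1 + y * Complex.I) (by simp)
  have hk1 : ∀ t ∈ Set.Ioi (0:ℝ), ((t * Real.log t : ℝ) : ℂ) *
      Complex.exp (-((1 + x * Complex.I) * t)) = f t := fun t ht => (key x t ht).symm
  have hk2 : ∀ t ∈ Set.Ioi (0:ℝ), ((t * Real.log t : ℝ) : ℂ) *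
      Complex.exp (-((1 + (-x : ℝ) * Complex.I) * t)) = f (-t) := by
    intro t ht
    rw [← key (-x) t ht, hf]
    simp
  have i1 : IntegrableOn f (Set.Ioi 0) := (hi x).congr_fun hk1 measurableSet_Ioi
  have i2 : IntegrableOn (fun t => f (-t)) (Set.Ioi 0) := (hi (-x)).congr_fun hk2 measurableSet_Ioi
  have i3 : IntegrableOn f (Set.Iic 0) := by
    rw [integrableOn_Iic_iff_integrableOn_Iio]
    have := i2.comp_neg
    simpa using this
  rw [← intervalIntegral.integral_Iic_add_Ioi i3 i1]
  congr 1
  · have := integral_comp_neg_Ioi 0 f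
    rw [neg_zero] at this
    rw [← this]
    exact (setIntegral_congr_fun measurableSet_Ioi hk2).symm
  · exact (setIntegral_congr_fun measurableSet_Ioi hk1).symm

/-- `−(1/(2π)) ∫ e^{−itx} e^{−|t|} |t| log|t| dt
  = [((1−x²)/(1+x²))((1/2)log(1+x²) − 1 + γ) + (2x/(1+x²)) arctan x] · (1/(π(1+x²)))`;
equivalently the MLE `α`-score at the Cauchy point equals the bracketed expression. -/
theorem stmt5 (x : ℝ) :
    -(1 / (2 * (π : ℂ))) * ∫ t : ℝ,
        Complex.exp (-(Complex.I * t * x)) * (Real.exp (-|t|) : ℂ) * ((|t| : ℝ) : ℂ)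
          * ((Real.log |t| : ℝ) : ℂ)
      = ((((1 - x ^ 2) / (1 + x ^ 2)) * ((1 / 2) * Real.log (1 + x ^ 2) - 1
              + Real.eulerMascheroniConstant)
            + (2 * x / (1 + x ^ 2)) * Real.arctan x) * (1 / (π * (1 + x ^ 2))) : ℝ) ∧
    -(1 / (2 * (π : ℂ) * ((1 / (π * (1 + x ^ 2)) : ℝ) : ℂ))) * ∫ t : ℝ,
        Complex.exp (-(Complex.I * t * x)) * (Real.exp (-|t|) : ℂ) * ((|t| : ℝ) : ℂ)
          * ((Real.log |t| : ℝ) : ℂ)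
      = ((((1 - x ^ 2) / (1 + x ^ 2)) * ((1 / 2) * Real.log (1 + x ^ 2) - 1
              + Real.eulerMascheroniConstant)
            + (2 * x / (1 + x ^ 2)) * Real.arctan x : ℝ) : ℂ) := by
  have hx : (1 + (x:ℂ) ^ 2) ≠ 0 := by
    have : (1 + x ^ 2) ≠ 0 := by positivity
    exact_mod_cast this
  have hpi : (π : ℂ) ≠ 0 := by exact_mod_cast Real.pi_ne_zero
  have hm : (1 + (x:ℂ) * Complex.I) * (1 - x * Complex.I) = 1 + (x:ℂ) ^ 2 := by
    linear_combination (-(x:ℂ) ^ 2) * Complex.I_sq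
  have hd1 : (1 + (x:ℂ) * Complex.I) ≠ 0 := fun h => hx (by rw [← hm, h, zero_mul])
  have hd2 : (1 - (x:ℂ) * Complex.I) ≠ 0 := fun h => hx (by rw [← hm, h, mul_zero])
  have main : ∫ t : ℝ, Complex.exp (-(Complex.I * t * x)) * (Real.exp (-|t|) : ℂ)
        * ((|t| : ℝ) : ℂ) * ((Real.log |t| : ℝ) : ℂ)
      = -2 * ((1 - (x:ℂ) ^ 2) * (1 / 2 * (Real.log (1 + x ^ 2) : ℝ) - 1
        + Real.eulerMascheroniConstant) + 2 * x * (Real.arctan x : ℝ)) / (1 + (x:ℂ) ^ 2) ^ 2 := by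
    rw [aux_integral, auxG_eq _ (by simp), auxG_eq _ (by simp), aux_log, aux_log,
      Real.arctan_neg]
    have e1 : (1 / (1 + (x:ℂ) * Complex.I) ^ 2) = (1 - x * Complex.I) ^ 2 / (1 + (x:ℂ) ^ 2) ^ 2 := by
      rw [← hm]; field_simp
    have e2 : (1 / (1 - (x:ℂ) * Complex.I) ^ 2) = (1 + x * Complex.I) ^ 2 / (1 + (x:ℂ) ^ 2) ^ 2 := by
      rw [← hm]; field_simp
    have e3 : (1 + ((-x : ℝ) : ℂ) * Complex.I) = 1 - x * Complex.I := by push_cast; ring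
    rw [e3, neg_sq, div_eq_mul_one_div, e2, div_eq_mul_one_div _ ((1 + (x:ℂ) * Complex.I) ^ 2), e1]
    rw [← mul_div_assoc, ← mul_div_assoc, ← add_div]
    congr 1
    push_cast
    generalize (Real.arctan x : ℂ) = A
    generalize (Real.log (1 + x ^ 2) : ℂ) = L
    ring_nf
    simp only [Complex.I_sq]
    ring
  rw [main]
  constructor
  · push_cast
    field_simp
  · push_cast
    field_simp
end

section
/- Let γ be the Euler–Mascheroni constant, h_σ(x) = (x²−1)/(x²+1), and h_α(x) = ((1−x²)/(1+x²))((1/2)log(1+x²) − 1 + γ) + (2x/(1+x²)) arctan x. Then ∫_ℝ h_σ(x) h_α(x) · (1/(π(1+x²))) dx = (1/2)(1 − γ − log 2) and ∫_ℝ h_α(x)² · (1/(π(1+x²))) dx = (1/2)( π²/6 + (γ + log 2 − 1)² ). -/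
open MeasureTheory Real

lemma mv_line (f : ℂ → ℂ) (hc : ContinuousOn f (Metric.closedBall 0 1))
    (hd : ∀ z ∈ Metric.ball (0:ℂ) 1, DifferentiableAt ℂ f z) :
    ∫ x : ℝ, (1 + x ^ 2)⁻¹ • f (circleMap 0 1 (2 * arctan x)) = π • f 0 := by
  have h1 : circleAverage f 0 1 = f 0 := by
    apply circleAverage_of_differentiable_on_off_countable (s := ∅) Set.countable_empty
    · simpa using hc
    · intro z hz; apply hd; simpa using hz
  rw [circleAverage_def] at h1
  have hp : Function.Periodic (fun θ => f (circleMap 0 1 θ)) (2 * π) := by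
    intro θ; simp only [periodic_circleMap 0 1 θ]
  have h2 := hp.intervalIntegral_add_eq (-π) 0
  rw [zero_add, show -π + 2 * π = π by ring] at h2
  rw [← h2, intervalIntegral.integral_of_le (by linarith [pi_pos]), integral_Ioc_eq_integral_Ioo] at h1
  have himg : (fun x : ℝ => 2 * arctan x) '' Set.univ = Set.Ioo (-π) π := by
    ext y
    constructor
    · rintro ⟨x, -, rfl⟩
      constructor
      · simp only; linarith [neg_pi_div_two_lt_arctan x]
      · simp only; linarith [arctan_lt_pi_div_two x]
    · rintro ⟨ha, hb⟩
      refine ⟨tan (y / 2), trivial, ?_⟩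
      simp only
      rw [arctan_tan (by linarith) (by linarith)]; ring
  rw [← himg, integral_image_eq_integral_abs_deriv_smul (f' := fun x => 2 * (1 + x ^ 2)⁻¹) MeasurableSet.univ
    (fun x _ => ((hasDerivAt_arctan' x).const_mul 2).hasDerivWithinAt)
    (fun x _ y _ h => arctan_injective (by simpa using h))] at h1
  rw [← h1, Measure.restrict_univ, smul_smul]
  have : ∀ x : ℝ, |2 * (1 + x ^ 2)⁻¹| = 2 * (1 + x ^ 2)⁻¹ := fun x => abs_of_nonneg (by positivity)
  simp_rw [this, mul_smul]
  rw [integral_smul, smul_smul, smul_smul]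
  have hpi := pi_ne_zero
  rw [show π * (2 * π)⁻¹ * 2 = 1 by field_simp, one_smul]

lemma circ_ne (x : ℝ) : 1 + circleMap 0 1 (2 * arctan x) =
    ((2 * cos (arctan x) : ℝ) : ℂ) * Complex.exp (arctan x * Complex.I) := by
  have h : Complex.exp (arctan x * Complex.I) * Complex.exp (-(arctan x * Complex.I)) = 1 := by
    rw [← Complex.exp_add]; simp
  generalize arctan x = t at *
  simp only [circleMap, zero_add, Complex.ofReal_one, one_mul]
  push_cast
  rw [show (2 * (t : ℂ) * Complex.I) = t * Complex.I + t * Complex.I by ring,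
    Complex.exp_add, Complex.cos]
  rw [show -(t : ℂ) * Complex.I = -(t * Complex.I) by ring]
  linear_combination -h

lemma log_circ (x : ℝ) : Complex.log (1 + circleMap 0 1 (2 * arctan x)) =
    ((log 2 - 1 / 2 * log (1 + x ^ 2) : ℝ) : ℂ) + arctan x * Complex.I := by
  have hc := cos_arctan_pos x
  have h1 : log 2 - 1 / 2 * log (1 + x ^ 2) = log (2 * cos (arctan x)) := by
    rw [cos_arctan, log_mul (by norm_num) (by positivity), one_div (√(1 + x ^ 2)), log_inv, log_sqrt (by positivity)]
    ring
  rw [h1, circ_ne]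
  have h2 : ((2 * cos (arctan x) : ℝ) : ℂ) = Complex.exp ((log (2 * cos (arctan x)) : ℝ) : ℂ) := by
    rw [← Complex.ofReal_exp, exp_log (by positivity)]
  have h3 := neg_pi_div_two_lt_arctan x
  have h4 := arctan_lt_pi_div_two x
  rw [h2, ← Complex.exp_add]
  generalize arctan x = t at *
  have h5 : ((log (2 * cos t) : ℂ) + t * Complex.I).im = t := by
    rw [Complex.add_im, Complex.ofReal_im, Complex.im_ofReal_mul, Complex.I_im]; ring
  rw [Complex.log_exp]
  · rw [h5]; linarith [pi_pos]
  · rw [h5]; linarith [pi_pos]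

lemma circ_ne_zero (x : ℝ) : 1 + circleMap 0 1 (2 * arctan x) ≠ 0 := by
  rw [circ_ne]
  have hc := cos_arctan_pos x
  apply mul_ne_zero _ (Complex.exp_ne_zero _)
  exact_mod_cast (by positivity)

lemma circ_re_im (x : ℝ) : circleMap 0 1 (2 * arctan x) =
    (((1 - x ^ 2) / (1 + x ^ 2) : ℝ) : ℂ) + ((2 * x / (1 + x ^ 2) : ℝ) : ℂ) * Complex.I := by
  have h1 : (1 - x ^ 2) / (1 + x ^ 2) = cos (2 * arctan x) := by
    rw [cos_two_mul, cos_sq_arctan]; field_simp; ring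
  have h2 : 2 * x / (1 + x ^ 2) = sin (2 * arctan x) := by
    rw [sin_two_mul, sin_arctan, cos_arctan]
    have : √(1 + x ^ 2) * √(1 + x ^ 2) = 1 + x ^ 2 := mul_self_sqrt (by positivity)
    have h0 : √(1 + x ^ 2) ≠ 0 := by positivity
    calc 2 * x / (1 + x ^ 2) = 2 * x / (√(1 + x ^ 2) * √(1 + x ^ 2)) := by rw [this]
      _ = _ := by field_simp
  rw [h1, h2, circleMap, Complex.exp_mul_I]
  simp

lemma mv_line_sing (H : ℂ → ℂ) (hc : ContinuousOn (fun z => (1 + z) * H z) (Metric.closedBall 0 1))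
    (hd : ∀ z ∈ Metric.ball (0:ℂ) 1, DifferentiableAt ℂ H z)
    (hi : Integrable (fun x : ℝ => (1 + x ^ 2)⁻¹ • H (circleMap 0 1 (2 * arctan x)))) :
    ∫ x : ℝ, (1 + x ^ 2)⁻¹ • H (circleMap 0 1 (2 * arctan x)) = π • H 0 := by
  have hre : ∀ z ∈ Metric.closedBall (0:ℂ) 1, 0 ≤ (1 + z).re := by
    intro z hz
    have h1 : ‖z‖ ≤ 1 := by simpa using hz
    have := (abs_le.1 (Complex.abs_re_le_norm z)).1
    simp; linarith
  have hne : ∀ δ : ℝ, 0 < δ → ∀ z ∈ Metric.closedBall (0:ℂ) 1, 1 + z + (δ:ℂ) ≠ 0 := by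
    intro δ hδ z hz h0
    have h1 := hre z hz
    have h2 := congrArg Complex.re h0
    simp at h1 h2; linarith
  have hcb : ∀ x : ℝ, circleMap 0 1 (2 * arctan x) ∈ Metric.closedBall (0:ℂ) 1 := by
    intro x; exact Metric.sphere_subset_closedBall (circleMap_mem_sphere 0 zero_le_one _)
  have hδ : ∀ n : ℕ, (0:ℝ) < 1 / ((n:ℝ) + 1) := fun n => by positivity
  let R : ℕ → ℂ → ℂ := fun n z => (1 + z) * H z / (1 + z + ((1 / ((n:ℝ) + 1) : ℝ) : ℂ))
  have key : ∀ n : ℕ, ∫ x : ℝ, (1 + x ^ 2)⁻¹ • R n (circleMap 0 1 (2 * arctan x)) = π • R n 0 := by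
    intro n
    apply mv_line
    · exact hc.div (by fun_prop) (hne _ (hδ n))
    · intro z hz
      have := hne _ (hδ n) z (Metric.ball_subset_closedBall hz)
      have h2 := hd z hz
      exact DifferentiableAt.div (by fun_prop) (by fun_prop) this
  have hR : ∀ z : ℂ, 1 + z ≠ 0 → Filter.Tendsto (fun n => R n z) Filter.atTop (nhds (H z)) := by
    intro z hz
    have h1 : Filter.Tendsto (fun n : ℕ => ((1 / ((n:ℝ) + 1) : ℝ) : ℂ)) Filter.atTop (nhds ((0:ℝ):ℂ)) :=
      (Complex.continuous_ofReal.tendsto _).comp tendsto_one_div_add_atTop_nhds_zero_nat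
    have h2 := (tendsto_const_nhds (x := (1 + z) * H z)).div
      ((tendsto_const_nhds (x := 1 + z)).add h1) (by simpa using hz)
    rw [Complex.ofReal_zero, add_zero, mul_div_cancel_left₀ _ hz] at h2
    exact h2
  have hlim := tendsto_integral_of_dominated_convergence
    (F := fun (n : ℕ) (x : ℝ) => (1 + x ^ 2)⁻¹ • R n (circleMap 0 1 (2 * arctan x)))
    (f := fun x => (1 + x ^ 2)⁻¹ • H (circleMap 0 1 (2 * arctan x))) (μ := volume)
    (fun x => ‖(1 + x ^ 2)⁻¹ • H (circleMap 0 1 (2 * arctan x))‖) ?_ hi.norm ?_ ?_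
  · refine tendsto_nhds_unique hlim ?_
    simp_rw [key]
    exact (hR 0 (by simp)).const_smul π
  · intro n
    apply Continuous.aestronglyMeasurable
    have hR' : ContinuousOn (R n) (Metric.closedBall 0 1) := hc.div (by fun_prop) (hne _ (hδ n))
    have h3 : Continuous fun x : ℝ => R n (circleMap 0 1 (2 * arctan x)) :=
      hR'.comp_continuous (by fun_prop) hcb
    have h4 : Continuous fun x : ℝ => (1 + x ^ 2)⁻¹ :=
      Continuous.inv₀ (by fun_prop) (fun x => by positivity)
    exact h4.smul h3
  · intro n
    refine Filter.Eventually.of_forall fun x => ?_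
    rw [norm_smul, norm_smul]
    gcongr
    set z := circleMap 0 1 (2 * arctan x) with hz
    have hz1 := hre z (hcb x)
    have hpos : 0 < ‖1 + z + ((1 / ((n:ℝ) + 1) : ℝ) : ℂ)‖ := norm_pos_iff.2 (hne _ (hδ n) z (hcb x))
    simp only [R]
    rw [norm_div, norm_mul, div_le_iff₀ hpos, mul_comm]
    gcongr
    have hd' := hδ n
    generalize (1 / ((n:ℝ) + 1)) = d at *
    generalize 1 + z = u at *
    rw [Complex.norm_def, Complex.norm_def]
    apply Real.sqrt_le_sqrt
    simp [Complex.normSq_apply]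
    nlinarith
  · refine Filter.Eventually.of_forall fun x => ?_
    exact (hR _ (circ_ne_zero x)).const_smul _

noncomputable def Hfun (a : ℝ) (m : ℕ) (z : ℂ) : ℂ :=
  1 / 2 * (1 + z ^ 2) * (Complex.log (1 + z) + a) ^ m

lemma slit_of {z : ℂ} (hz : z ∈ Metric.closedBall (0:ℂ) 1) (h : 1 + z ≠ 0) :
    1 + z ∈ Complex.slitPlane := by
  have h1 : ‖z‖ ≤ 1 := by simpa using hz
  rw [Complex.mem_slitPlane_iff]
  by_contra! hcon
  obtain ⟨h2, h3⟩ := hcon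
  simp at h2 h3
  have := (abs_le.1 (Complex.abs_re_le_norm z)).1
  apply h
  apply Complex.ext
  · simp; linarith
  · simpa using h3

lemma tendsto_aux (a : ℝ) (m : ℕ) (hm : m ≤ 2) :
    Filter.Tendsto (fun u : ℂ => u * (Complex.log u + a) ^ m) (nhds 0) (nhds 0) := by
  have h1 : Filter.Tendsto (fun t : ℝ => log t * t ^ (1/4:ℝ)) (nhdsWithin 0 (Set.Ioi 0)) (nhds 0) :=
    tendsto_log_mul_rpow_nhdsGT_zero (by norm_num)
  have h2 : ∀ p : ℝ, 0 < p → Filter.Tendsto (fun t : ℝ => t ^ p) (nhdsWithin 0 (Set.Ioi 0)) (nhds 0) := by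
    intro p hp
    have := (continuousAt_rpow_const (0:ℝ) p (Or.inr hp.le)).tendsto
    rw [zero_rpow hp.ne'] at this
    exact this.mono_left nhdsWithin_le_nhds
  have h3 : Filter.Tendsto (fun t : ℝ => t ^ (1 - m / 4 : ℝ) *
      (|log t * t ^ (1/4:ℝ)| + (π + |a|) * t ^ (1/4:ℝ)) ^ m) (nhdsWithin 0 (Set.Ioi 0)) (nhds 0) := by
    have hm' : (m:ℝ) ≤ 2 := by exact_mod_cast hm
    have := (h2 (1 - m / 4 : ℝ) (by linarith)).mul
      ((h1.abs.add ((h2 (1/4) (by norm_num)).const_mul (π + |a|))).pow m)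
    simpa using this
  have h4 : Filter.Tendsto (fun u : ℂ => ‖u‖) (nhdsWithin 0 {0}ᶜ) (nhdsWithin 0 (Set.Ioi 0)) :=
    tendsto_norm_nhdsNE_zero
  have h5 := h3.comp h4
  have h6 : Filter.Tendsto (fun u : ℂ => u * (Complex.log u + a) ^ m) (nhdsWithin 0 {0}ᶜ) (nhds 0) := by
    refine squeeze_zero_norm' ?_ h5
    filter_upwards [self_mem_nhdsWithin] with u hu
    have hu : 0 < ‖u‖ := norm_pos_iff.2 hu
    simp only [Function.comp]
    have hL : ‖Complex.log u + a‖ ≤ |log ‖u‖| + (π + |a|) := by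
      have e1 := norm_add_le (Complex.log u) (a:ℂ)
      have e2 := Complex.norm_le_abs_re_add_abs_im (Complex.log u)
      rw [Complex.log_re, Complex.log_im] at e2
      have e3 := Complex.abs_arg_le_pi u
      rw [Complex.norm_real, norm_eq_abs] at e1
      linarith
    have hE : ‖u‖ ^ (1 - m / 4 : ℝ) *
      (|log ‖u‖ * ‖u‖ ^ (1/4:ℝ)| + (π + |a|) * ‖u‖ ^ (1/4:ℝ)) ^ m =
        ‖u‖ * (|log ‖u‖| + (π + |a|)) ^ m := by
      rw [abs_mul, abs_of_nonneg (rpow_nonneg hu.le _), ← add_mul, mul_pow, ← rpow_mul_natCast hu.le,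
        mul_comm _ (‖u‖ ^ _), ← mul_assoc, ← rpow_add hu]
      rw [show (1 - m / 4 + 1 / 4 * m : ℝ) = 1 by ring, rpow_one]
    rw [hE, norm_mul, norm_pow]
    gcongr
  have h7 : ContinuousAt (fun u : ℂ => u * (Complex.log u + a) ^ m) 0 := by
    rw [continuousAt_iff_punctured_nhds]
    simpa using h6
  simpa using h7.tendsto

lemma Hcont (a : ℝ) (m : ℕ) (hm : m ≤ 2) :
    ContinuousOn (fun z => (1 + z) * Hfun a m z) (Metric.closedBall 0 1) := by
  intro z hz
  apply ContinuousAt.continuousWithinAt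
  have he : (fun z : ℂ => (1 + z) * Hfun a m z) = fun z => 1 / 2 * (1 + z ^ 2) *
      (fun u : ℂ => u * (Complex.log u + a) ^ m) (1 + z) := by
    ext z; simp only [Hfun]; ring
  rw [he]
  apply ContinuousAt.mul (by fun_prop)
  by_cases h : 1 + z = 0
  · refine ContinuousAt.comp (f := fun z : ℂ => 1 + z) (g := fun u : ℂ => u * (Complex.log u + a) ^ m) (x := z) ?_ (by fun_prop)
    simp only [h]
    have := tendsto_aux a m hm
    rw [ContinuousAt]; simpa using this
  · have hs := slit_of hz h
    have : ContinuousAt (fun z : ℂ => Complex.log (1 + z)) z :=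
      ContinuousAt.clog (by fun_prop) hs
    simp only
    fun_prop

lemma Hdiff (a : ℝ) (m : ℕ) : ∀ z ∈ Metric.ball (0:ℂ) 1, DifferentiableAt ℂ (Hfun a m) z := by
  intro z hz
  have h : 1 + z ≠ 0 := by
    intro h0
    have : z = -1 := by linear_combination h0
    simp [this] at hz
  have hs := slit_of (Metric.ball_subset_closedBall hz) h
  have : DifferentiableAt ℂ (fun z : ℂ => Complex.log (1 + z)) z :=
    DifferentiableAt.clog (by fun_prop) hs
  unfold Hfun
  fun_prop

lemma Hint (a : ℝ) (m : ℕ) (hm : m ≤ 2) :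
    Integrable (fun x : ℝ => (1 + x ^ 2)⁻¹ • Hfun a m (circleMap 0 1 (2 * arctan x))) := by
  have hI : Integrable (fun x : ℝ => (1 + ‖x‖ ^ 2) ^ (-(3/2:ℝ) / 2)) :=
    integrable_rpow_neg_one_add_norm_sq (by simp; norm_num)
  set C : ℝ := log 2 + π / 2 + |a| + 4 with hC
  have hlog2 : 0 < log 2 := log_pos (by norm_num)
  have hC1 : 1 ≤ C := by have := pi_pos; have := abs_nonneg a; linarith
  refine (hI.const_mul (C ^ 2)).mono' ?_ ?_
  · apply Continuous.aestronglyMeasurable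
    unfold Hfun
    simp_rw [log_circ]
    have h4 : Continuous fun x : ℝ => (1 + x ^ 2)⁻¹ :=
      Continuous.inv₀ (by fun_prop) (fun x => by positivity)
    have h5 : Continuous fun x : ℝ => log (1 + x ^ 2) :=
      Continuous.log (by fun_prop) (fun x => by positivity)
    fun_prop
  · refine Filter.Eventually.of_forall fun x => ?_
    have hy : 1 ≤ 1 + x ^ 2 := by nlinarith
    have hz : ‖circleMap 0 1 (2 * arctan x)‖ = 1 := by simp [norm_circleMap_zero]
    rw [norm_smul, norm_inv, norm_eq_abs, abs_of_pos (by positivity), norm_eq_abs, sq_abs]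
    have hW : ‖Complex.log (1 + circleMap 0 1 (2 * arctan x)) + a‖ ≤ C * (1 + x ^ 2) ^ (1/8:ℝ) := by
      rw [log_circ]
      have e1 := log_le_rpow_div (x := 1 + x ^ 2) (ε := 1/8) (by positivity) (by norm_num)
      have e2 : 1 ≤ (1 + x ^ 2) ^ (1/8:ℝ) := one_le_rpow hy (by norm_num)
      have e3 : 0 ≤ log (1 + x ^ 2) := log_nonneg hy
      have e4 := norm_add₃_le (a := ((log 2 - 1 / 2 * log (1 + x ^ 2) : ℝ) : ℂ)) (b := arctan x * Complex.I) (c := (a:ℂ))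
      rw [norm_mul, Complex.norm_I, mul_one, Complex.norm_real, Complex.norm_real, Complex.norm_real,
        norm_eq_abs, norm_eq_abs, norm_eq_abs] at e4
      have e5 : |log 2 - 1 / 2 * log (1 + x ^ 2)| ≤ log 2 + 1 / 2 * log (1 + x ^ 2) := by
        rw [abs_le]; constructor <;> linarith
      have e6 : |arctan x| ≤ π / 2 := by
        rw [abs_le]; constructor <;> linarith [neg_pi_div_two_lt_arctan x, arctan_lt_pi_div_two x]
      have e7 : (log 2 + π / 2 + |a|) * 1 ≤ (log 2 + π / 2 + |a|) * (1 + x ^ 2) ^ (1/8:ℝ) := by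
        gcongr
      rw [hC]
      linarith
    have hH : ‖Hfun a m (circleMap 0 1 (2 * arctan x))‖ ≤ (C * (1 + x ^ 2) ^ (1/8:ℝ)) ^ 2 := by
      unfold Hfun
      rw [norm_mul, norm_mul, norm_pow]
      have f1 : ‖(1 / 2 : ℂ)‖ = 1 / 2 := by norm_num
      have f2 : ‖1 + (circleMap 0 1 (2 * arctan x)) ^ 2‖ ≤ 2 := by
        refine (norm_add_le _ _).trans ?_
        rw [norm_pow, hz]; norm_num
      have f3 : 1 ≤ C * (1 + x ^ 2) ^ (1/8:ℝ) :=
        one_le_mul_of_one_le_of_one_le hC1 (one_le_rpow hy (by norm_num))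
      calc _ ≤ 1 / 2 * 2 * (C * (1 + x ^ 2) ^ (1/8:ℝ)) ^ m := by rw [f1]; gcongr
        _ = (C * (1 + x ^ 2) ^ (1/8:ℝ)) ^ m := by ring
        _ ≤ _ := pow_le_pow_right₀ f3 hm
    calc _ ≤ (1 + x ^ 2)⁻¹ * (C * (1 + x ^ 2) ^ (1/8:ℝ)) ^ 2 := by gcongr
      _ = C ^ 2 * ((1 + x ^ 2) ^ (-1:ℝ) * ((1 + x ^ 2) ^ (1/8:ℝ)) ^ 2) := by
          rw [rpow_neg_one]; ring
      _ = C ^ 2 * (1 + x ^ 2) ^ (-(3/2:ℝ) / 2) := by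
          rw [← rpow_mul_natCast (by positivity), ← rpow_add (by positivity)]; norm_num
      _ ≤ _ := le_rfl

lemma Hre (a : ℝ) (m : ℕ) (hm : m ≤ 2) :
    Integrable (fun x : ℝ => (1 + x ^ 2)⁻¹ * (Hfun a m (circleMap 0 1 (2 * arctan x))).re) ∧
    ∫ x : ℝ, (1 + x ^ 2)⁻¹ * (Hfun a m (circleMap 0 1 (2 * arctan x))).re = π * (1 / 2 * a ^ m) := by
  have h1 := mv_line_sing _ (Hcont a m hm) (Hdiff a m) (Hint a m hm)
  have h2 := Complex.reCLM.integral_comp_comm (Hint a m hm)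
  have h3 := Complex.reCLM.integrable_comp (Hint a m hm)
  simp only [Complex.reCLM_apply, Complex.smul_re, smul_eq_mul] at h2 h3
  refine ⟨h3, h2.trans ?_⟩
  rw [h1, Complex.smul_re, smul_eq_mul]
  congr 1
  simp only [Hfun]
  rw [show (1 / 2 * (1 + 0 ^ 2) * (Complex.log (1 + 0) + (a:ℂ)) ^ m : ℂ) = ((1 / 2 * a ^ m : ℝ) : ℂ) by
    push_cast; simp, Complex.ofReal_re]

lemma arctan_sq_int : Integrable (fun x : ℝ => (1 + x ^ 2)⁻¹ * arctan x ^ 2) ∧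
    ∫ x : ℝ, (1 + x ^ 2)⁻¹ * arctan x ^ 2 = π ^ 3 / 12 := by
  have hi : Integrable (fun x : ℝ => (1 + x ^ 2)⁻¹ * arctan x ^ 2) := by
    refine (integrable_inv_one_add_sq.mul_const ((π / 2) ^ 2)).mono' ?_ ?_
    · apply Continuous.aestronglyMeasurable
      have h4 : Continuous fun x : ℝ => (1 + x ^ 2)⁻¹ :=
        Continuous.inv₀ (by fun_prop) (fun x => by positivity)
      fun_prop
    · refine Filter.Eventually.of_forall fun x => ?_
      rw [norm_eq_abs, abs_of_nonneg (by positivity)]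
      have : arctan x ^ 2 ≤ (π / 2) ^ 2 :=
        sq_le_sq' (by linarith [neg_pi_div_two_lt_arctan x]) (arctan_lt_pi_div_two x).le
      gcongr
  refine ⟨hi, ?_⟩
  have hb := tendsto_nhds_of_tendsto_nhdsWithin tendsto_arctan_atBot
  have ht := tendsto_nhds_of_tendsto_nhdsWithin tendsto_arctan_atTop
  rw [integral_of_hasDerivAt_of_tendsto (f := fun x => arctan x ^ 3 / 3) ?_ hi
    ((hb.pow 3).div_const 3) ((ht.pow 3).div_const 3)]
  · ring
  · intro x
    have := ((hasDerivAt_arctan' x).pow 3).div_const 3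
    refine this.congr_deriv ?_
    push_cast; ring

theorem stmt7 (hσ hα : ℝ → ℝ)
    (hhσ : ∀ x, hσ x = (x ^ 2 - 1) / (x ^ 2 + 1))
    (hhα : ∀ x, hα x = ((1 - x ^ 2) / (1 + x ^ 2))
        * ((1 / 2) * Real.log (1 + x ^ 2) - 1 + Real.eulerMascheroniConstant)
      + (2 * x / (1 + x ^ 2)) * Real.arctan x) :
    (∫ x : ℝ, hσ x * hα x * (1 / (π * (1 + x ^ 2))))
        = (1 / 2) * (1 - Real.eulerMascheroniConstant - Real.log 2) ∧
    (∫ x : ℝ, (hα x) ^ 2 * (1 / (π * (1 + x ^ 2))))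
        = (1 / 2) * (π ^ 2 / 6 + (Real.eulerMascheroniConstant + Real.log 2 - 1) ^ 2) := by
  have hpi := pi_ne_zero
  set γ := Real.eulerMascheroniConstant
  obtain ⟨i1, e1⟩ := Hre (1 - γ - log 2) 1 (by norm_num)
  obtain ⟨i2, e2⟩ := Hre (1 - γ - log 2) 2 (by norm_num)
  obtain ⟨i3, e3⟩ := arctan_sq_int
  have hre : ∀ x : ℝ, ∀ m, Hfun (1 - γ - log 2) m (circleMap 0 1 (2 * arctan x)) =
      1 / 2 * (1 + ((((1 - x ^ 2) / (1 + x ^ 2) : ℝ) : ℂ) + ((2 * x / (1 + x ^ 2) : ℝ) : ℂ) * Complex.I) ^ 2)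
        * (((1 - γ - 1 / 2 * log (1 + x ^ 2) : ℝ) : ℂ) + arctan x * Complex.I) ^ m := by
    intro x m
    rw [Hfun, log_circ, circ_re_im]
    push_cast
    ring
  have hcs : ∀ x : ℝ, ((1 - x ^ 2) / (1 + x ^ 2)) ^ 2 + (2 * x / (1 + x ^ 2)) ^ 2 = 1 := by
    intro x; field_simp; ring
  have r1 : ∀ c s l t : ℝ, (1 / 2 * (1 + ((c:ℂ) + s * Complex.I) ^ 2) * ((l:ℂ) + t * Complex.I) ^ 1).re
      = 1 / 2 * ((1 + c ^ 2 - s ^ 2) * l - 2 * c * s * t) := by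
    intro c s l t
    rw [show (1 / 2 * (1 + ((c:ℂ) + s * Complex.I) ^ 2) * ((l:ℂ) + t * Complex.I) ^ 1) =
      ((1 / 2 * ((1 + c ^ 2 - s ^ 2) * l - 2 * c * s * t) : ℝ) : ℂ) +
      ((1 / 2 * ((1 + c ^ 2 - s ^ 2) * t + 2 * c * s * l) : ℝ) : ℂ) * Complex.I by
        push_cast
        linear_combination (1 / 2 * (s:ℂ) ^ 2 * (l + t * Complex.I) + c * s * t) * Complex.I_sq]
    rw [Complex.add_re, Complex.ofReal_re, Complex.re_ofReal_mul, Complex.I_re]; ring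
  have r2 : ∀ c s l t : ℝ, (1 / 2 * (1 + ((c:ℂ) + s * Complex.I) ^ 2) * ((l:ℂ) + t * Complex.I) ^ 2).re
      = 1 / 2 * ((1 + c ^ 2 - s ^ 2) * (l ^ 2 - t ^ 2) - 2 * c * s * (2 * l * t)) := by
    intro c s l t
    rw [← r1]
    congr 2
    push_cast
    linear_combination (t:ℂ) ^ 2 * Complex.I_sq
  constructor
  · rw [show (fun x : ℝ => hσ x * hα x * (1 / (π * (1 + x ^ 2)))) = fun x =>
      π⁻¹ * ((1 + x ^ 2)⁻¹ * (Hfun (1 - γ - log 2) 1 (circleMap 0 1 (2 * arctan x))).re) from ?_,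
      integral_const_mul, e1]
    · field_simp
    · ext x
      rw [hre, r1, hhσ, hhα]
      have h1 : (x ^ 2 - 1) / (x ^ 2 + 1) = - ((1 - x ^ 2) / (1 + x ^ 2)) := by
        field_simp; ring
      have h2 := hcs x
      rw [h1, one_div (π * _), mul_inv]
      generalize (1 - x ^ 2) / (1 + x ^ 2) = c at *
      generalize 2 * x / (1 + x ^ 2) = s at *
      have h3 : s ^ 2 = 1 - c ^ 2 := by linarith
      rw [h3]; ring
  · rw [show (fun x : ℝ => hα x ^ 2 * (1 / (π * (1 + x ^ 2)))) = fun x =>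
      π⁻¹ * ((1 + x ^ 2)⁻¹ * (Hfun (1 - γ - log 2) 2 (circleMap 0 1 (2 * arctan x))).re
        + (1 + x ^ 2)⁻¹ * arctan x ^ 2) from ?_,
      integral_const_mul, integral_add i2 i3, e2, e3]
    · field_simp; ring
    · ext x
      rw [hre, r2, hhα]
      have h2 := hcs x
      rw [one_div (π * _), mul_inv]
      generalize (1 - x ^ 2) / (1 + x ^ 2) = c at *
      generalize 2 * x / (1 + x ^ 2) = s at *
      have h3 : s ^ 2 = 1 - c ^ 2 := by linarith
      generalize arctan x = t
      rw [show ∀ L : ℝ, (c * L + s * t) ^ 2 = c ^ 2 * L ^ 2 + 2 * c * s * L * t + s ^ 2 * t ^ 2 by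
        intro L; ring, h3]
      ring
end

section
/- Let μ be a Borel probability measure on ℝ with ∫_ℝ e^{itx} dμ(x) = e^{−|t|^α} for all t (0 < α ≤ 2), and let w : ℝ → [0,∞) be an even measurable function with ∫_ℝ |u| w(u) du < ∞. Define h_μ(x) = ∫_ℝ u sin(ux) e^{−|u|^α} w(u) du. Then for every s ∈ ℝ, ∫_ℝ e^{isx} h_μ(x) dμ(x) = i ∫_ℝ e^{−|s−u|^α − |u|^α} u w(u) du. -/
open MeasureTheory Real

/-- Fourier-kernel transform of the EISE location estimating function:
`∫ e^{isx} h_μ(x) dμ(x) = i ∫ e^{−|s−u|^α − |u|^α} u w(u) du`. -/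
theorem stmt10 (μ : Measure ℝ) [IsProbabilityMeasure μ] (α : ℝ) (hα : α ∈ Set.Ioc (0 : ℝ) 2)
    (hchar : ∀ t : ℝ, ∫ x, Complex.exp (Complex.I * t * x) ∂μ = (Real.exp (-|t| ^ α) : ℂ))
    (w : ℝ → ℝ) (hw0 : ∀ u, 0 ≤ w u) (hwe : ∀ u, w (-u) = w u) (hwm : Measurable w)
    (hwi : Integrable (fun u => |u| * w u)) (s : ℝ) :
    ∫ x, Complex.exp (Complex.I * s * x)
        * ((∫ u : ℝ, u * Real.sin (u * x) * Real.exp (-|u| ^ α) * w u : ℝ) : ℂ) ∂μ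
      = Complex.I * ((∫ u : ℝ, Real.exp (-|s - u| ^ α - |u| ^ α) * u * w u : ℝ) : ℂ) := by
  have hα0 : 0 < α := hα.1
  have hg1 : ∀ t : ℝ, Real.exp (-|t| ^ α) ≤ 1 := fun t => by
    rw [Real.exp_le_one_iff]
    have := Real.rpow_nonneg (abs_nonneg t) α
    linarith
  have hgm : Measurable (fun t : ℝ => Real.exp (-|t| ^ α)) := by
    have : Measurable (fun t : ℝ => |t|) := continuous_abs.measurable
    exact Real.measurable_exp.comp ((this.pow_const α).neg)
  -- the function A
  set A : ℝ → ℝ := fun u => Real.exp (-|s - u| ^ α - |u| ^ α) * u * w u with hA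
  have hAg : ∀ u, A u = Real.exp (-|s - u| ^ α) * Real.exp (-|u| ^ α) * u * w u := fun u => by
    simp only [hA]
    rw [← Real.exp_add, sub_eq_add_neg (-|s - u| ^ α)]
  have hAm : Measurable A := by
    have h1 : Measurable (fun u : ℝ => Real.exp (-|s - u| ^ α)) :=
      hgm.comp (measurable_const.sub measurable_id)
    have : A = fun u => Real.exp (-|s - u| ^ α) * Real.exp (-|u| ^ α) * u * w u := funext hAg
    rw [this]
    exact ((h1.mul hgm).mul measurable_id).mul hwm
  have hAi : Integrable A := by
    refine hwi.mono' hAm.aestronglyMeasurable (Filter.Eventually.of_forall fun u => ?_)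
    rw [hAg, Real.norm_eq_abs, abs_mul, abs_mul, abs_mul, abs_of_nonneg (hw0 u),
      abs_of_pos (Real.exp_pos _), abs_of_pos (Real.exp_pos _)]
    refine mul_le_mul_of_nonneg_right ?_ (hw0 u)
    refine mul_le_of_le_one_left (abs_nonneg u) ?_
    exact mul_le_one₀ (hg1 _) (Real.exp_pos _).le (hg1 _)
  set F : ℝ → ℝ → ℂ := fun x u => Complex.exp (Complex.I * s * x)
        * ((u * Real.sin (u * x) * Real.exp (-|u| ^ α) * w u : ℝ) : ℂ) with hF
  have hFm : Measurable (Function.uncurry F) := by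
    have h1 : Measurable (fun p : ℝ × ℝ => Complex.exp (Complex.I * s * p.1)) := by fun_prop
    have h2 : Measurable (fun p : ℝ × ℝ =>
        p.2 * Real.sin (p.2 * p.1) * Real.exp (-|p.2| ^ α) * w p.2) :=
      ((measurable_snd.mul (by fun_prop)).mul (hgm.comp measurable_snd)).mul
        (hwm.comp measurable_snd)
    exact h1.mul (Complex.measurable_ofReal.comp h2)
  have hFi : Integrable (Function.uncurry F) (μ.prod volume) := by
    have hb : Integrable (fun p : ℝ × ℝ => |p.2| * w p.2) (μ.prod volume) := hwi.comp_snd μ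
    refine hb.mono' hFm.aestronglyMeasurable (Filter.Eventually.of_forall fun p => ?_)
    obtain ⟨x, u⟩ := p
    simp only [Function.uncurry, hF]
    have he : ‖Complex.exp (Complex.I * s * x)‖ = 1 := by
      rw [show Complex.I * s * x = ((s * x : ℝ) : ℂ) * Complex.I by push_cast; ring]
      exact Complex.norm_exp_ofReal_mul_I _
    rw [norm_mul, he, one_mul, Complex.norm_real, Real.norm_eq_abs, abs_mul, abs_mul, abs_mul,
      abs_of_nonneg (hw0 u), abs_of_pos (Real.exp_pos _)]
    refine mul_le_mul_of_nonneg_right ?_ (hw0 u)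
    rw [mul_assoc]
    refine mul_le_of_le_one_right (abs_nonneg u) ?_
    exact mul_le_one₀ (Real.abs_sin_le_one _) (Real.exp_pos _).le (hg1 _)
  have hei : ∀ t : ℝ, Integrable (fun x : ℝ => Complex.exp (Complex.I * t * x)) μ := fun t => by
    refine (integrable_const (1 : ℝ)).mono' (by fun_prop) (Filter.Eventually.of_forall fun x => ?_)
    rw [show Complex.I * t * x = ((t * x : ℝ) : ℂ) * Complex.I by push_cast; ring]
    exact (Complex.norm_exp_ofReal_mul_I _).le
  have hinner : ∀ u, ∫ x, F x u ∂μ = (Complex.I / 2) * ((A u + A (-u) : ℝ) : ℂ) := fun u => by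
    have h1 : ∀ x : ℝ, F x u = (Complex.I / 2 * ((u * Real.exp (-|u| ^ α) * w u : ℝ) : ℂ)) *
        (Complex.exp (Complex.I * ((s - u : ℝ) : ℂ) * x)
          - Complex.exp (Complex.I * ((s + u : ℝ) : ℂ) * x)) := fun x => by
      simp only [hF]
      have e1 : Complex.exp (Complex.I * ((s - u : ℝ) : ℂ) * x)
          = Complex.exp (Complex.I * s * x) * Complex.exp (-(u * x) * Complex.I) := by
        rw [← Complex.exp_add]; congr 1; push_cast; ring
      have e2 : Complex.exp (Complex.I * ((s + u : ℝ) : ℂ) * x)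
          = Complex.exp (Complex.I * s * x) * Complex.exp ((u * x) * Complex.I) := by
        rw [← Complex.exp_add]; congr 1; push_cast; ring
      rw [e1, e2]
      push_cast [Complex.sin]
      ring
    simp_rw [h1]
    rw [integral_const_mul, integral_sub (hei _) (hei _), hchar, hchar, hAg, hAg]
    rw [hwe, abs_neg, sub_neg_eq_add]
    push_cast
    ring
  calc _ = ∫ x, ∫ u, F x u ∂volume ∂μ := by
        refine integral_congr_ae (Filter.Eventually.of_forall fun x => ?_)
        simp only [hF]
        rw [integral_const_mul, integral_complex_ofReal]
    _ = ∫ u, ∫ x, F x u ∂μ := integral_integral_swap hFi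
    _ = _ := by
        simp_rw [hinner]
        rw [integral_const_mul, integral_complex_ofReal, integral_add hAi hAi.comp_neg,
          integral_neg_eq_self A volume]
        push_cast
        ring
end

section
/- Let μ be a Borel probability measure on ℝ with ∫_ℝ e^{itx} dμ(x) = e^{−|t|^α} for all t (0 < α ≤ 2), and let w : ℝ → [0,∞) be an even measurable function with ∫_ℝ |u|^α (1 + |log|u||) w(u) du < ∞. Define h_σ(x) = −α ∫_ℝ (cos(ux) − e^{−|u|^α}) e^{−|u|^α} |u|^α w(u) du, h_α(x) = −∫_ℝ (cos(ux) − e^{−|u|^α}) e^{−|u|^α} |u|^α log|u| w(u) du, B_σ = α ∫_ℝ e^{−2|u|^α} |u|^α w(u) du, and B_α = ∫_ℝ e^{−2|u|^α} |u|^α log|u| w(u) du. Then for every s ∈ ℝ: ∫_ℝ e^{isx} h_σ(x) dμ(x) = B_σ e^{−|s|^α} − α ∫_ℝ e^{−|s−u|^α − |u|^α} |u|^α w(u) du, and ∫_ℝ e^{isx} h_α(x) dμ(x) = B_α e^{−|s|^α} − ∫_ℝ e^{−|s−u|^α − |u|^α} |u|^α log|u| w(u) du. -/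
open MeasureTheory Real

lemma aux_bdd (g : ℝ → ℝ) (hg : Integrable g) (x : ℝ) :
    Integrable (fun u : ℝ => Complex.exp (-(Complex.I * u * x)) * (g u : ℂ)) := by
  refine (hg.ofReal (𝕜 := ℂ)).bdd_mul (c := 1) (by fun_prop) (Filter.Eventually.of_forall fun u => ?_)
  have : -(Complex.I * u * x) = ((-(u * x) : ℝ) : ℂ) * Complex.I := by push_cast; ring
  rw [this, Complex.norm_exp_ofReal_mul_I]

lemma aux_cos (g : ℝ → ℝ) (hg : Integrable g) (he : ∀ u, g (-u) = g u) (x : ℝ) :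
    ((∫ u : ℝ, Real.cos (u * x) * g u : ℝ) : ℂ)
      = ∫ u : ℝ, Complex.exp (-(Complex.I * u * x)) * (g u : ℂ) := by
  have h1 := aux_bdd g hg x
  have h2 := integral_neg_eq_self (fun u : ℝ => Complex.exp (-(Complex.I * u * x)) * (g u : ℂ)) volume
  have h3 := integral_add h1 h1.comp_neg
  rw [h2, ← two_mul] at h3
  rw [← integral_complex_ofReal, ← mul_right_inj' (two_ne_zero (α := ℂ)), ← h3, ← integral_const_mul]
  congr 1
  funext u
  rw [he]
  push_cast
  rw [Complex.cos]
  have e1 : (u : ℂ) * x * Complex.I = Complex.I * u * x := by ring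
  have e2 : -((u : ℂ) * x) * Complex.I = -(Complex.I * u * x) := by ring
  have e3 : -(Complex.I * -(u : ℂ) * x) = Complex.I * u * x := by ring
  rw [e1, e2, e3]
  ring

lemma aux_main (μ : Measure ℝ) [IsProbabilityMeasure μ] (φ : ℝ → ℝ)
    (hφm : Measurable φ) (hφb : ∀ t, |φ t| ≤ 1)
    (hchar : ∀ t : ℝ, ∫ x, Complex.exp (Complex.I * t * x) ∂μ = (φ t : ℂ))
    (g : ℝ → ℝ) (hg : Integrable g) (he : ∀ u, g (-u) = g u) (s : ℝ) :
    ∫ x, Complex.exp (Complex.I * s * x)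
        * ((∫ u : ℝ, (Real.cos (u * x) - φ u) * g u : ℝ) : ℂ) ∂μ
      = ((∫ u : ℝ, φ (s - u) * g u : ℝ) : ℂ) - ((∫ u : ℝ, φ u * g u : ℝ) : ℂ) * (φ s : ℂ) := by
  have hexp : ∀ t x : ℝ, ‖Complex.exp (Complex.I * t * x)‖ = 1 := fun t x => by
    have : (Complex.I * t * x) = (((t * x) : ℝ) : ℂ) * Complex.I := by push_cast; ring
    rw [this, Complex.norm_exp_ofReal_mul_I]
  have hφg : Integrable (fun u => φ u * g u) :=
    hg.bdd_mul (c := 1) hφm.aestronglyMeasurable (Filter.Eventually.of_forall hφb)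
  have hcg : ∀ x : ℝ, Integrable (fun u => Real.cos (u * x) * g u) := fun x =>
    hg.bdd_mul (c := 1) (by fun_prop) (Filter.Eventually.of_forall fun u => Real.abs_cos_le_one _)
  have key : ∀ x : ℝ, Complex.exp (Complex.I * s * x)
        * ((∫ u : ℝ, (Real.cos (u * x) - φ u) * g u : ℝ) : ℂ)
      = (∫ u : ℝ, Complex.exp (Complex.I * ((s - u : ℝ) : ℂ) * x) * (g u : ℂ))
        - ((∫ u : ℝ, φ u * g u : ℝ) : ℂ) * Complex.exp (Complex.I * s * x) := by
    intro x
    simp_rw [sub_mul]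
    rw [integral_sub (hcg x) hφg, Complex.ofReal_sub, aux_cos g hg he x, mul_sub,
      ← integral_const_mul]
    congr 1
    · congr 1
      funext u
      rw [← mul_assoc, ← Complex.exp_add]
      congr 2
      push_cast
      ring
    · ring
  have hint : Integrable (fun p : ℝ × ℝ =>
      Complex.exp (Complex.I * ((s - p.2 : ℝ) : ℂ) * p.1) * (g p.2 : ℂ)) (μ.prod volume) := by
    have h0 : Integrable (fun p : ℝ × ℝ => (g p.2 : ℂ)) (μ.prod volume) :=
      (hg.ofReal (𝕜 := ℂ)).comp_snd μ
    exact h0.bdd_mul (c := 1) (by fun_prop) (Filter.Eventually.of_forall fun p => (hexp _ _).le)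
  have hint2 : Integrable (fun x : ℝ => Complex.exp (Complex.I * s * x)) μ :=
    Integrable.of_bound (by fun_prop) 1 (Filter.Eventually.of_forall fun x => (hexp _ _).le)
  simp_rw [key]
  rw [integral_sub hint.integral_prod_left (hint2.const_mul _), integral_const_mul, hchar,
    integral_integral_swap (f := fun (x u : ℝ) => Complex.exp (Complex.I * ((s - u : ℝ) : ℂ) * x) * (g u : ℂ)) hint]
  simp_rw [integral_mul_const, hchar]
  congr 1
  rw [← integral_complex_ofReal]
  simp only [Complex.ofReal_mul]


/-- Fourier-kernel transforms of the EISE scale and characteristic-exponent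
estimating functions. -/
theorem stmt11 (μ : Measure ℝ) [IsProbabilityMeasure μ] (α : ℝ) (hα : α ∈ Set.Ioc (0 : ℝ) 2)
    (hchar : ∀ t : ℝ, ∫ x, Complex.exp (Complex.I * t * x) ∂μ = (Real.exp (-|t| ^ α) : ℂ))
    (w : ℝ → ℝ) (hw0 : ∀ u, 0 ≤ w u) (hwe : ∀ u, w (-u) = w u) (hwm : Measurable w)
    (hwi : Integrable (fun u => |u| ^ α * (1 + abs (Real.log |u|)) * w u)) (s : ℝ) :
    (∫ x, Complex.exp (Complex.I * s * x)
        * ((-α * ∫ u : ℝ, (Real.cos (u * x) - Real.exp (-|u| ^ α))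
              * Real.exp (-|u| ^ α) * |u| ^ α * w u : ℝ) : ℂ) ∂μ
      = ((α * ∫ u : ℝ, Real.exp (-2 * |u| ^ α) * |u| ^ α * w u : ℝ) : ℂ)
          * (Real.exp (-|s| ^ α) : ℂ)
        - (α : ℂ) * ((∫ u : ℝ, Real.exp (-|s - u| ^ α - |u| ^ α) * |u| ^ α * w u : ℝ) : ℂ)) ∧
    (∫ x, Complex.exp (Complex.I * s * x)
        * ((-∫ u : ℝ, (Real.cos (u * x) - Real.exp (-|u| ^ α))
              * Real.exp (-|u| ^ α) * |u| ^ α * Real.log |u| * w u : ℝ) : ℂ) ∂μ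
      = ((∫ u : ℝ, Real.exp (-2 * |u| ^ α) * |u| ^ α * Real.log |u| * w u : ℝ) : ℂ)
          * (Real.exp (-|s| ^ α) : ℂ)
        - ((∫ u : ℝ, Real.exp (-|s - u| ^ α - |u| ^ α) * |u| ^ α * Real.log |u| * w u : ℝ) : ℂ)) := by

  have hα0 := hα.1
  have hpm : Measurable (fun u : ℝ => |u| ^ α) := by fun_prop
  have hφm : Measurable (fun u : ℝ => Real.exp (-|u| ^ α)) := by fun_prop
  have hp : ∀ u : ℝ, 0 ≤ |u| ^ α := fun u => Real.rpow_nonneg (abs_nonneg u) α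
  have hφ1 : ∀ u : ℝ, |Real.exp (-|u| ^ α)| ≤ 1 := fun u => by
    rw [Real.abs_exp]
    exact Real.exp_le_one_iff.2 (neg_nonpos.2 (hp u))
  have hlm : Measurable (fun u : ℝ => Real.log |u|) := by fun_prop
  have hI1 : Integrable (fun u => Real.exp (-|u| ^ α) * (|u| ^ α * w u)) := by
    refine Integrable.bdd_mul (c := 1) ?_ hφm.aestronglyMeasurable
      (Filter.Eventually.of_forall hφ1)
    refine hwi.mono' (by fun_prop) (Filter.Eventually.of_forall fun u => ?_)
    have := mul_nonneg (hp u) (hw0 u)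
    rw [Real.norm_eq_abs, abs_of_nonneg this]
    nlinarith [abs_nonneg (Real.log |u|)]
  have hI2 : Integrable (fun u => Real.exp (-|u| ^ α) * (|u| ^ α * Real.log |u| * w u)) := by
    refine Integrable.bdd_mul (c := 1) ?_ hφm.aestronglyMeasurable
      (Filter.Eventually.of_forall hφ1)
    refine hwi.mono' (by fun_prop) (Filter.Eventually.of_forall fun u => ?_)
    have := mul_nonneg (hp u) (hw0 u)
    rw [Real.norm_eq_abs, abs_mul, abs_mul, abs_of_nonneg (hp u), abs_of_nonneg (hw0 u)]
    nlinarith [abs_nonneg (Real.log |u|)]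
  have M1 := aux_main μ _ hφm hφ1 hchar _ hI1 (fun u => by simp [hwe]) s
  have M2 := aux_main μ _ hφm hφ1 hchar _ hI2 (fun u => by simp [hwe]) s
  have e2 : ∀ u : ℝ, Real.exp (-2 * |u| ^ α) = Real.exp (-|u| ^ α) * Real.exp (-|u| ^ α) :=
    fun u => by rw [← Real.exp_add]; ring_nf
  have e3 : ∀ u : ℝ, Real.exp (-|s - u| ^ α - |u| ^ α)
      = Real.exp (-|s - u| ^ α) * Real.exp (-|u| ^ α) :=
    fun u => by rw [← Real.exp_add]; ring_nf
  constructor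
  · simp_rw [e2, e3]
    simp only [← mul_assoc] at M1
    simp only [Complex.ofReal_mul, Complex.ofReal_neg, mul_left_comm _ (-(α : ℂ)) _]
    rw [integral_const_mul, M1]
    ring
  · simp_rw [e2, e3]
    simp only [← mul_assoc] at M2
    simp only [Complex.ofReal_neg, mul_neg]
    rw [integral_neg, M2]
    ring
end

section
/- Let μ be a Borel probability measure on ℝ with ∫_ℝ e^{itx} dμ(x) = e^{−|t|^α} for all t (0 < α ≤ 2), and let w : ℝ → [0,∞) be an even measurable function with ∫_ℝ |u| w(u) du < ∞. Define h_μ(x) = ∫_ℝ u sin(ux) e^{−|u|^α} w(u) du. Then ∫_ℝ h_μ(x)² dμ(x) = ∫_ℝ ∫_ℝ (1/2)( e^{−|s−t|^α} − e^{−|s+t|^α} ) e^{−(|s|^α + |t|^α)} s t w(s) w(t) ds dt. -/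
open MeasureTheory Real

lemma stmt12_cos (μ : Measure ℝ) [IsProbabilityMeasure μ] (α : ℝ)
    (hchar : ∀ t : ℝ, ∫ x, Complex.exp (Complex.I * t * x) ∂μ = (Real.exp (-|t| ^ α) : ℂ))
    (t : ℝ) : ∫ x, Real.cos (t * x) ∂μ = Real.exp (-|t| ^ α) := by
  have hi : Integrable (fun x : ℝ => Complex.exp (Complex.I * t * x)) μ := by
    refine Integrable.of_bound (C := 1) (by fun_prop) (Filter.Eventually.of_forall fun x => ?_)
    have : Complex.I * t * x = ((t * x : ℝ) : ℂ) * Complex.I := by push_cast; ring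
    rw [this, Complex.norm_exp_ofReal_mul_I]
  have h := congrArg Complex.re (hchar t)
  rw [Complex.ofReal_re] at h
  rw [← h]
  have h2 := integral_re hi
  simp only [RCLike.re_eq_complex_re] at h2
  rw [← h2]
  congr 1
  ext x
  have : Complex.I * t * x = ((t * x : ℝ) : ℂ) * Complex.I := by push_cast; ring
  rw [this, Complex.exp_ofReal_mul_I_re]

lemma stmt12_sin (μ : Measure ℝ) [IsProbabilityMeasure μ] (α : ℝ)
    (hchar : ∀ t : ℝ, ∫ x, Complex.exp (Complex.I * t * x) ∂μ = (Real.exp (-|t| ^ α) : ℂ))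
    (s t : ℝ) : ∫ x, Real.sin (s * x) * Real.sin (t * x) ∂μ
      = (1 / 2) * (Real.exp (-|s - t| ^ α) - Real.exp (-|s + t| ^ α)) := by
  have hi (a : ℝ) : Integrable (fun x : ℝ => Real.cos (a * x)) μ :=
    Integrable.of_bound (C := 1) (by fun_prop)
      (Filter.Eventually.of_forall fun x => Real.abs_cos_le_one _)
  rw [← stmt12_cos μ α hchar, ← stmt12_cos μ α hchar, ← integral_sub (hi _) (hi _),
    ← integral_const_mul]
  congr 1
  ext x
  rw [sub_mul, add_mul, Real.cos_sub, Real.cos_add]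
  ring

/-- The entry `H_{μμ} = E[h_μ(X)²]` of the second-moment matrix of the EISE
estimating function. -/
theorem stmt12 (μ : Measure ℝ) [IsProbabilityMeasure μ] (α : ℝ) (hα : α ∈ Set.Ioc (0 : ℝ) 2)
    (hchar : ∀ t : ℝ, ∫ x, Complex.exp (Complex.I * t * x) ∂μ = (Real.exp (-|t| ^ α) : ℂ))
    (w : ℝ → ℝ) (hw0 : ∀ u, 0 ≤ w u) (hwe : ∀ u, w (-u) = w u) (hwm : Measurable w)
    (hwi : Integrable (fun u => |u| * w u)) :
    ∫ x, (∫ u : ℝ, u * Real.sin (u * x) * Real.exp (-|u| ^ α) * w u) ^ 2 ∂μ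
      = ∫ s : ℝ, ∫ t : ℝ,
          (1 / 2) * (Real.exp (-|s - t| ^ α) - Real.exp (-|s + t| ^ α))
            * Real.exp (-(|s| ^ α + |t| ^ α)) * s * t * w s * w t := by
  have habs : Measurable (fun u : ℝ => |u|) := continuous_abs.measurable
  set g : ℝ → ℝ := fun u => u * Real.exp (-|u| ^ α) * w u with hg
  have hgm : Measurable g := by
    have : Measurable (fun u : ℝ => Real.exp (-|u| ^ α)) :=
      ((habs.pow_const α).neg).exp
    exact (measurable_id.mul this).mul hwm
  have hgi : Integrable g := by
    refine hwi.mono hgm.aestronglyMeasurable (Filter.Eventually.of_forall fun u => ?_)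
    have h1 : Real.exp (-|u| ^ α) ≤ 1 :=
      Real.exp_le_one_iff.2 (neg_nonpos.2 (Real.rpow_nonneg (abs_nonneg u) α))
    simp only [hg, norm_mul, Real.norm_eq_abs, abs_abs, Real.abs_exp]
    gcongr
    exact mul_le_of_le_one_right (abs_nonneg u) h1
  have hgg : Integrable (fun p : ℝ × ℝ => g p.1 * g p.2) (volume.prod volume) :=
    hgi.mul_prod hgi
  have hsq (x : ℝ) : (∫ u : ℝ, u * Real.sin (u * x) * Real.exp (-|u| ^ α) * w u) ^ 2
      = ∫ p : ℝ × ℝ, (Real.sin (p.1 * x) * Real.sin (p.2 * x)) * (g p.1 * g p.2)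
          ∂(volume.prod volume) := by
    rw [sq, ← integral_prod_mul]
    congr 1
    ext p
    simp only [hg]
    ring
  have hF : Integrable (Function.uncurry fun (x : ℝ) (p : ℝ × ℝ) =>
      (Real.sin (p.1 * x) * Real.sin (p.2 * x)) * (g p.1 * g p.2))
      (μ.prod (volume.prod volume)) := by
    have h0 : Integrable (fun q : ℝ × (ℝ × ℝ) => g q.2.1 * g q.2.2)
        (μ.prod (volume.prod volume)) := hgg.comp_snd μ
    refine h0.bdd_mul (c := 1) (f := fun q : ℝ × (ℝ × ℝ) =>
      Real.sin (q.2.1 * q.1) * Real.sin (q.2.2 * q.1)) ?_ ?_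
    · exact Continuous.aestronglyMeasurable (by fun_prop)
    · refine Filter.Eventually.of_forall fun q => ?_
      rw [norm_mul]
      exact mul_le_one₀ (Real.abs_sin_le_one _) (norm_nonneg _) (Real.abs_sin_le_one _)
  simp_rw [hsq]
  rw [integral_integral_swap hF]
  have hin := hF.integral_prod_right
  simp only [Function.uncurry_apply_pair] at hin
  rw [integral_prod _ hin]
  congr 1
  ext s
  congr 1
  ext t
  rw [integral_mul_const, stmt12_sin μ α hchar]
  simp only [hg]
  rw [neg_add, Real.exp_add]
  ring
end

section
/- For every s ∈ ℝ: ∫_ℝ e^{isx} · (2x/(π(1+x²)²)) dx = i s e^{−|s|} and ∫_ℝ e^{isx} · ((x²−1)/(π(1+x²)²)) dx = −|s| e^{−|s|}. -/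
open MeasureTheory Real

lemma half_line (x : ℝ) :
    ∫ t in Set.Ioi (0:ℝ), Complex.exp (-(1 + Complex.I * x) * t) * (t : ℂ)
      = 1 / (1 + Complex.I * x) ^ 2 := by
  have ha : (1 + Complex.I * x : ℂ) ≠ 0 := by
    intro h
    have := congrArg Complex.re h
    simp at this
  set a : ℂ := 1 + Complex.I * x with hadef
  have hre : a.re = 1 := by simp [hadef]
  have hnorm : ∀ t : ℝ, ‖Complex.exp (-a * t)‖ = Real.exp (-t) := by
    intro t
    rw [Complex.norm_exp]
    simp [hre]
  have hder : ∀ t ∈ Set.Ioi (0:ℝ), HasDerivAt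
      (fun t : ℝ => -((t : ℂ) / a + 1 / a ^ 2) * Complex.exp (-a * t))
      (Complex.exp (-a * t) * (t : ℂ)) t := by
    intro t _
    have h1 : HasDerivAt (fun t : ℝ => (t : ℂ)) 1 t := Complex.ofRealCLM.hasDerivAt
    have h2 := (((h1.div_const a).add_const (1 / a ^ 2)).neg).mul ((h1.const_mul (-a)).cexp)
    refine h2.congr_deriv ?_
    simp only [Pi.neg_apply]
    field_simp
    ring
  have hint : IntegrableOn (fun t : ℝ => Complex.exp (-a * t) * (t : ℂ)) (Set.Ioi 0) := by
    have h := Real.GammaIntegral_convergent (s := 2) (by norm_num)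
    refine Integrable.mono' h (by fun_prop) ?_
    filter_upwards [ae_restrict_mem measurableSet_Ioi] with t ht
    rw [norm_mul, hnorm, Complex.norm_real, Real.norm_of_nonneg (le_of_lt ht)]
    norm_num
  have hlim : Filter.Tendsto (fun t : ℝ => -((t : ℂ) / a + 1 / a ^ 2) * Complex.exp (-a * t))
      Filter.atTop (nhds 0) := by
    have e0 := tendsto_pow_mul_exp_neg_atTop_nhds_zero 0
    have e1 := tendsto_pow_mul_exp_neg_atTop_nhds_zero 1
    have e := (e1.const_mul ‖a‖⁻¹).add (e0.const_mul ‖1 / a ^ 2‖)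
    simp only [mul_zero, add_zero] at e
    refine squeeze_zero_norm' ?_ e
    filter_upwards [Filter.eventually_ge_atTop 0] with t ht
    rw [norm_mul, hnorm, norm_neg]
    have : ‖(t : ℂ) / a + 1 / a ^ 2‖ ≤ t * ‖a‖⁻¹ + ‖1 / a ^ 2‖ := by
      refine (norm_add_le _ _).trans ?_
      rw [norm_div, Complex.norm_real, Real.norm_of_nonneg ht, div_eq_mul_inv]
    have h := mul_le_mul_of_nonneg_right this (Real.exp_pos (-t)).le
    refine h.trans (le_of_eq ?_)
    ring
  have hcont : ContinuousWithinAt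
      (fun t : ℝ => -((t : ℂ) / a + 1 / a ^ 2) * Complex.exp (-a * t)) (Set.Ici 0) 0 := by
    apply Continuous.continuousWithinAt
    fun_prop
  rw [integral_Ioi_of_hasDerivAt_of_tendsto hcont hder hint hlim]
  simp

lemma integrable_base : Integrable (fun t : ℝ => |t| * Real.exp (-|t|)) := by
  have h : IntegrableOn (fun t : ℝ => t * Real.exp (-t)) (Set.Ioi 0) := by
    have h := Real.GammaIntegral_convergent (s := 2) (by norm_num)
    refine h.congr_fun (fun t _ => ?_) measurableSet_Ioi
    norm_num [mul_comm]
  have h1 := (integrable_indicator_iff measurableSet_Ioi).2 h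
  refine (h1.add h1.comp_neg).congr (Filter.Eventually.of_forall fun t => ?_)
  rcases lt_trichotomy t 0 with ht | ht | ht
  · simp [Set.indicator, ht, ht.le, abs_of_neg ht]
  · simp [Set.indicator, ht]
  · simp [Set.indicator, ht, ht.le, abs_of_pos ht]

lemma integrable_f (a b : ℂ) :
    Integrable (fun t : ℝ => (a * t + b * (|t| : ℝ)) * (Real.exp (-|t|) : ℂ)) := by
  refine Integrable.mono' (integrable_base.const_mul (‖a‖ + ‖b‖)) ?_ ?_
  · apply Continuous.aestronglyMeasurable
    fun_prop
  · refine Filter.Eventually.of_forall fun t => ?_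
    rw [norm_mul, Complex.norm_real, Real.norm_of_nonneg (Real.exp_pos _).le, ← mul_assoc]
    refine mul_le_mul_of_nonneg_right ?_ (Real.exp_pos _).le
    refine (norm_add_le _ _).trans (le_of_eq ?_)
    simp
    ring

lemma transform_f (a b : ℂ) (x : ℝ) :
    ∫ t : ℝ, Complex.exp (-(Complex.I * x * t)) *
      ((a * t + b * (|t| : ℝ)) * (Real.exp (-|t|) : ℂ))
      = (a + b) / (1 + Complex.I * x) ^ 2 + (b - a) / (1 - Complex.I * x) ^ 2 := by
  have hi : Integrable (fun t : ℝ => Complex.exp (-(Complex.I * x * t)) *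
      ((a * t + b * (|t| : ℝ)) * (Real.exp (-|t|) : ℂ))) := by
    refine (integrable_f a b).bdd_mul (c := 1) ?_ ?_
    · apply Continuous.aestronglyMeasurable
      fun_prop
    · refine Filter.Eventually.of_forall fun t => ?_
      rw [Complex.norm_exp]
      simp
  rw [← intervalIntegral.integral_Iic_add_Ioi (b := 0) hi.integrableOn hi.integrableOn, add_comm]
  congr 1
  · have : ∀ t ∈ Set.Ioi (0:ℝ), Complex.exp (-(Complex.I * x * t)) *
      ((a * t + b * (|t| : ℝ)) * (Real.exp (-|t|) : ℂ)) =
        (a + b) * (Complex.exp (-(1 + Complex.I * x) * t) * (t : ℂ)) := by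
      intro t ht
      rw [abs_of_pos ht, show (-(1 + Complex.I * x) * t : ℂ) = -(Complex.I * x * t) + -t by ring,
        Complex.exp_add]
      push_cast
      ring
    rw [setIntegral_congr_fun measurableSet_Ioi this, integral_const_mul, half_line]
    ring
  · have h0 := integral_comp_neg_Ioi (0:ℝ) (fun t : ℝ => Complex.exp (-(Complex.I * x * t)) *
      ((a * t + b * (|t| : ℝ)) * (Real.exp (-|t|) : ℂ)))
    rw [neg_zero] at h0
    rw [← h0]
    have : ∀ t ∈ Set.Ioi (0:ℝ), Complex.exp (-(Complex.I * x * (-t : ℝ))) *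
      ((a * (-t : ℝ) + b * (|-t| : ℝ)) * (Real.exp (-|-t|) : ℂ)) =
        (b - a) * (Complex.exp (-(1 + Complex.I * (-x : ℝ)) * t) * (t : ℂ)) := by
      intro t ht
      rw [abs_neg, abs_of_pos ht, show (-(1 + Complex.I * (-x : ℝ)) * t : ℂ)
        = -(Complex.I * x * (-t : ℝ)) + -t by push_cast; ring,
        Complex.exp_add]
      push_cast
      ring
    rw [setIntegral_congr_fun measurableSet_Ioi this, integral_const_mul, half_line]
    push_cast
    ring

lemma norm_aux (x : ℝ) (c : ℂ) : ‖c / (1 + Complex.I * x) ^ 2‖ = ‖c‖ * (1 + x ^ 2)⁻¹ := by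
  rw [norm_div, norm_pow, Complex.sq_norm, Complex.normSq_apply, div_eq_mul_inv]
  simp
  left
  ring

lemma ne_aux (x : ℝ) : (1 + Complex.I * x : ℂ) ≠ 0 := by
  intro h
  have := congrArg Complex.re h
  simp at this

lemma integrable_aux (c : ℂ) : Integrable (fun x : ℝ => c / (1 + Complex.I * x) ^ 2) := by
  refine Integrable.mono' (integrable_inv_one_add_sq.const_mul ‖c‖) ?_ ?_
  · apply Continuous.aestronglyMeasurable
    exact continuous_const.div (by fun_prop) (fun x => pow_ne_zero _ (ne_aux x))
  · exact Filter.Eventually.of_forall fun t => (norm_aux t c).le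

lemma integrable_G (a b : ℂ) : Integrable (fun x : ℝ =>
    (a + b) / (1 + Complex.I * x) ^ 2 + (b - a) / (1 - Complex.I * x) ^ 2) := by
  refine (integrable_aux (a + b)).add ?_
  have := (integrable_aux (b - a)).comp_neg
  simpa [sub_eq_add_neg] using this

open FourierTransform in
lemma inversion (a b : ℂ) (s : ℝ) :
    ∫ x : ℝ, Complex.exp (Complex.I * s * x) *
      ((a + b) / (1 + Complex.I * x) ^ 2 + (b - a) / (1 - Complex.I * x) ^ 2)
      = 2 * π * ((a * s + b * (|s| : ℝ)) * (Real.exp (-|s|) : ℂ)) := by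
  set f : ℝ → ℂ := fun t : ℝ => (a * t + b * (|t| : ℝ)) * (Real.exp (-|t|) : ℂ) with hf
  set G : ℝ → ℂ := fun x : ℝ =>
    (a + b) / (1 + Complex.I * x) ^ 2 + (b - a) / (1 - Complex.I * x) ^ 2 with hG
  have hF : 𝓕 f = fun w => G (2 * π * w) := by
    ext w
    rw [Real.fourier_real_eq_integral_exp_smul, hG]
    simp only
    rw [← transform_f a b]
    congr 1 with t
    rw [smul_eq_mul]
    congr 2
    push_cast
    ring
  have h2 : (2 * π : ℝ) ≠ 0 := by positivity
  have hFi : Integrable (𝓕 f) := by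
    rw [hF]
    exact (integrable_G a b).comp_mul_left' h2
  have hc : Continuous f := by
    rw [hf]
    fun_prop
  have key := congrFun (hc.fourierInv_fourier_eq (integrable_f a b) hFi) s
  rw [Real.fourierInv_eq', hF] at key
  have hs := Measure.integral_comp_mul_left (fun x : ℝ => Complex.exp (Complex.I * s * x) * G x)
    (2 * π)
  have : (∫ v : ℝ, Complex.exp (((2 * π * inner ℝ v s : ℝ) : ℂ) * Complex.I) • G (2 * π * v))
      = ∫ x : ℝ, Complex.exp (Complex.I * s * (2 * π * x : ℝ)) * G (2 * π * x) := by
    congr 1 with v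
    rw [smul_eq_mul]
    congr 2
    simp
    ring
  rw [this, hs, abs_of_pos (by positivity), Complex.real_smul] at key
  change _ = 2 * π * f s
  rw [← key]
  have : (π : ℂ) ≠ 0 := by exact_mod_cast Real.pi_ne_zero
  push_cast
  field_simp
  rfl

/-- Fourier-kernel transforms of the Cauchy location and scale scores:
`∫ e^{isx} h_μ(x) f(x) dx = i s e^{−|s|}` and `∫ e^{isx} h_σ(x) f(x) dx = −|s| e^{−|s|}`. -/
theorem stmt16 (s : ℝ) :
    (∫ x : ℝ, Complex.exp (Complex.I * s * x) * ((2 * x / (π * (1 + x ^ 2) ^ 2) : ℝ) : ℂ)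
      = Complex.I * s * (Real.exp (-|s|) : ℂ)) ∧
    (∫ x : ℝ, Complex.exp (Complex.I * s * x) * (((x ^ 2 - 1) / (π * (1 + x ^ 2) ^ 2) : ℝ) : ℂ)
      = -((|s| : ℝ) : ℂ) * (Real.exp (-|s|) : ℂ)) := by
  have hpi : (π : ℂ) ≠ 0 := by exact_mod_cast Real.pi_ne_zero
  have hm : ∀ x : ℝ, (1 - Complex.I * x : ℂ) ≠ 0 := fun x => by
    have := ne_aux (-x)
    simpa [sub_eq_add_neg] using this
  have hprod : ∀ x : ℝ, (1 + (x:ℂ) ^ 2) = (1 + Complex.I * x) * (1 - Complex.I * x) := fun x => by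
    linear_combination ((x:ℂ) ^ 2) * Complex.I_sq
  have main : ∀ (a b : ℂ) (g : ℝ → ℝ), (∀ x : ℝ, ((g x : ℝ) : ℂ) = (2 * π : ℂ)⁻¹ *
      ((a + b) / (1 + Complex.I * x) ^ 2 + (b - a) / (1 - Complex.I * x) ^ 2)) →
      ∫ x : ℝ, Complex.exp (Complex.I * s * x) * ((g x : ℝ) : ℂ)
        = (a * s + b * (|s| : ℝ)) * (Real.exp (-|s|) : ℂ) := by
    intro a b g hg
    simp_rw [hg, mul_left_comm _ ((2 * π : ℂ)⁻¹)]
    rw [integral_const_mul, inversion]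
    field_simp
  constructor
  · rw [main Complex.I 0]
    · simp
    · intro x
      have h1 := ne_aux x
      have h2 := hm x
      push_cast
      rw [hprod]
      generalize hp : (1 + Complex.I * x : ℂ) = p at *
      generalize hq : (1 - Complex.I * x : ℂ) = q at *
      field_simp
      rw [← hp, ← hq]
      linear_combination (4 * (x:ℂ)) * Complex.I_sq
  · rw [main 0 (-1)]
    · simp
    · intro x
      have h1 := ne_aux x
      have h2 := hm x
      push_cast
      rw [hprod]
      generalize hp : (1 + Complex.I * x : ℂ) = p at *
      generalize hq : (1 - Complex.I * x : ℂ) = q at *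
      field_simp
      rw [← hp, ← hq]
      linear_combination (2 * (x:ℂ) ^ 2) * Complex.I_sq
end
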